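/- arXiv:1804.07213 — 2 statements merged into one kernel-verified Lean document; each statement's English description precedes it below -/
import Mathlib

section
/- Let F(x) = f(x) + P₁(x) − P₂(x) be level-bounded, and let {x^k} and {ξ^k} be the sequences generated by pDCA_e for minimizing F. Then for every k ≥ 1, E(x^{k+1}, ξ^{k+1}, x^k) ≤ E(x^k, ξ^k, x^{k−1}) − (L/2)(1 − β_k²)‖x^k − x^{k−1}‖². -/
open Filter Topology Set Metric Bornology
open scoped RealInnerProductSpace

noncomputable section

abbrev Eucl (n : ℕ) := EuclideanSpace ℝ (Fin n)

variable {H : Type*} [NormedAddCommGroup H] [InnerProductSpace ℝ H]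

/-- Fréchet (regular) subgradient of an extended-real-valued function. -/
def FrechetSubgradAt (h : H → EReal) (v x : H) : Prop :=
  ∀ ε : ℝ, 0 < ε →
    ∀ᶠ y in 𝓝[≠] x, h x + ((⟪v, y - x⟫ - ε * ‖y - x‖ : ℝ) : EReal) ≤ h y

/-- Limiting (Mordukhovich) subdifferential. -/
def limSubdiff (h : H → EReal) (x : H) : Set H :=
  {v | ∃ xs vs : ℕ → H,
    Tendsto xs atTop (𝓝 x) ∧
    Tendsto (fun k => h (xs k)) atTop (𝓝 (h x)) ∧
    Tendsto vs atTop (𝓝 v) ∧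
    ∀ k, FrechetSubgradAt h (vs k) (xs k)}

/-- Convex subgradient of a real-valued function. -/
def ConvexSubgradAt (g : H → ℝ) (v x : H) : Prop :=
  ∀ y, g x + ⟪v, y - x⟫ ≤ g y

/-- Convex subgradient of an extended-real-valued function. -/
def ConvexSubgradAtE (g : H → EReal) (v x : H) : Prop :=
  ∀ y, g x + ((⟪v, y - x⟫ : ℝ) : EReal) ≤ g y

/-- Convex conjugate of a real-valued function. -/
def conjE (g : H → ℝ) (y : H) : EReal :=
  ⨆ x : H, ((⟪x, y⟫ - g x : ℝ) : EReal)

/-- `P` is proper, closed (lsc) and convex. -/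
def ProperClosedConvexE (P : H → EReal) : Prop :=
  (∀ x, P x ≠ ⊥) ∧ (∃ x, P x ≠ ⊤) ∧ LowerSemicontinuous P ∧
  (∀ x y : H, ∀ t : ℝ, t ∈ Ioo (0:ℝ) 1 →
    P (t • x + (1 - t) • y) ≤ (t : EReal) * P x + ((1 - t : ℝ) : EReal) * P y)

/-- KL property with exponent `α` at a point. -/
def KLExpAt (h : H → EReal) (α : ℝ) (x₀ : H) : Prop :=
  ∃ c > (0:ℝ), ∃ ε > (0:ℝ), ∃ a > (0:ℝ), ∀ x : H,
    ‖x - x₀‖ ≤ ε → h x₀ < h x → h x < h x₀ + (a : EReal) →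
    (limSubdiff h x).Nonempty →
    1 ≤ c * (1 - α) * ((h x).toReal - (h x₀).toReal) ^ (-α) * infDist 0 (limSubdiff h x)

/-- KL function with exponent `α`. -/
def IsKLWithExp (h : H → EReal) (α : ℝ) : Prop :=
  ∀ x₀ : H, (limSubdiff h x₀).Nonempty → KLExpAt h α x₀

/-- KL property (general desingularizing function) at a point. -/
def KLAt (h : H → EReal) (x₀ : H) : Prop :=
  ∃ a > (0:ℝ), ∃ U ∈ 𝓝 x₀, ∃ φ φd : ℝ → ℝ,
    ContinuousOn φ (Ico 0 a) ∧ ConcaveOn ℝ (Ico 0 a) φ ∧ φ 0 = 0 ∧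
    (∀ s ∈ Ico (0:ℝ) a, 0 ≤ φ s) ∧
    (∀ s ∈ Ioo (0:ℝ) a, HasDerivAt φ (φd s) s ∧ 0 < φd s) ∧
    ∀ x ∈ U, h x₀ < h x → h x < h x₀ + (a : EReal) → (limSubdiff h x).Nonempty →
      1 ≤ φd ((h x).toReal - (h x₀).toReal) * infDist 0 (limSubdiff h x)

/-- KL function. -/
def IsKLFun (h : H → EReal) : Prop :=
  ∀ x₀ : H, (limSubdiff h x₀).Nonempty → KLAt h x₀

/-- The potential function `E(x,y,w) = f(x) + P₁(x) - ⟨x,y⟩ + P₂*(y) + L/2 ‖x-w‖²`. -/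
def potE (f : H → ℝ) (P₁ : H → EReal) (P₂ : H → ℝ) (L : ℝ) (x y w : H) : EReal :=
  ((f x : ℝ) : EReal) + P₁ x - ((⟪x, y⟫ : ℝ) : EReal) + conjE P₂ y
    + ((L / 2 * ‖x - w‖ ^ 2 : ℝ) : EReal)

/-- The pDCAe iteration: `ξ^{k+1} ∈ ∂P₂(x^k)`, `u^k = x^k + β_k (x^k - x^{k-1})` and
`x^{k+1}` is the minimizer of `⟨∇f(u^k) - ξ^{k+1}, ·⟩ + L/2 ‖· - u^k‖² + P₁(·)`.
(`x⁻¹ = x⁰` is encoded by truncated subtraction in `ℕ`.) -/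
def IsPDCAe (f' : H → H) (P₁ : H → EReal) (P₂ : H → ℝ) (L : ℝ) (β : ℕ → ℝ)
    (x ξ : ℕ → H) : Prop :=
  P₁ (x 0) ≠ ⊤ ∧
  (∀ k : ℕ, ConvexSubgradAt P₂ (ξ (k + 1)) (x k)) ∧
  (∀ k : ℕ, ∀ z : H,
    ((⟪f' (x k + β k • (x k - x (k - 1))) - ξ (k + 1), x (k + 1)⟫
        + L / 2 * ‖x (k + 1) - (x k + β k • (x k - x (k - 1)))‖ ^ 2 : ℝ) : EReal)
      + P₁ (x (k + 1))
      ≤ ((⟪f' (x k + β k • (x k - x (k - 1))) - ξ (k + 1), z⟫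
        + L / 2 * ‖z - (x k + β k • (x k - x (k - 1)))‖ ^ 2 : ℝ) : EReal) + P₁ z)

/-- Triples `(x, y, w)` with the ℓ² product inner product structure. -/
abbrev Trip (n : ℕ) := WithLp 2 (Eucl n × WithLp 2 (Eucl n × Eucl n))

def mkTrip {n : ℕ} (a b c : Eucl n) : Trip n :=
  (WithLp.equiv 2 _).symm (a, (WithLp.equiv 2 _).symm (b, c))

/-- `potE` as a function on triples. -/
def potE3 {n : ℕ} (f : Eucl n → ℝ) (P₁ : Eucl n → EReal) (P₂ : Eucl n → ℝ) (L : ℝ)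
    (p : Trip n) : EReal :=
  potE f P₁ P₂ L ((WithLp.equiv 2 _) p).1 ((WithLp.equiv 2 _) ((WithLp.equiv 2 _) p).2).1
    ((WithLp.equiv 2 _) ((WithLp.equiv 2 _) p).2).2

/-!
Write `F = f + P₁ - P₂` and `u = x^k + β_k (x^k - x^{k-1})`. Two consecutive values of the potential
are compared through the value of `F` at the same point `x^k`:
`E(x^{k+1}, ξ^{k+1}, x^k) ≤ F(x^k) + L/2 ‖x^k - u‖²` and
`F(x^k) + L/2 ‖x^k - x^{k-1}‖² ≤ E(x^k, ξ^k, x^{k-1})`.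
Since `‖x^k - u‖ = β_k ‖x^k - x^{k-1}‖`, the difference of the two quadratic terms is the decrease.

The lower bound is the Fenchel–Young inequality. For the upper bound, Fenchel's equality for
`ξ^{k+1} ∈ ∂P₂(x^k)` replaces `P₂*(ξ^{k+1})` by `⟨x^k, ξ^{k+1}⟩ - P₂(x^k)`; the `L`-Lipschitz
gradient bounds `f(x^{k+1})` by the quadratic model of `f` at `u`; the subproblem being `L`-strongly
convex, its value at the minimizer `x^{k+1}` is below its value at `x^k` by at least
`L/2 ‖x^k - x^{k+1}‖²`, which absorbs the quadratic term of `E`; and convexity bounds the linear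
model of `f` at `u`, evaluated at `x^k`, by `f(x^k)`.
-/

section Calculus

variable {E : Type*} [NormedAddCommGroup E] [NormedSpace ℝ E] {s : Set E} {f : E → ℝ} {x y : E}

lemma add_fderivWithin_le_of_convexOn {f' : E →L[ℝ] ℝ} (hf : ConvexOn ℝ s f)
    (hf' : HasFDerivWithinAt f f' s x) (hx : x ∈ s) (hy : y ∈ s) :
    f x + f' (y - x) ≤ f y := by
  have hline : HasDerivWithinAt (f ∘ AffineMap.lineMap (k := ℝ) x y) (f' (y - x))
      (AffineMap.lineMap x y ⁻¹' s) 0 :=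
    hf'.comp_hasDerivWithinAt_of_eq 0 AffineMap.hasDerivWithinAt_lineMap (mapsTo_preimage _ _)
      (AffineMap.lineMap_apply_zero x y).symm
  have hslope := (hf.comp_affineMap (AffineMap.lineMap x y)).le_slope_of_hasDerivWithinAt
    (x := 0) (y := 1) (by simpa using hx) (by simpa using hy) zero_lt_one hline
  simp only [slope_def_field, Function.comp_apply, AffineMap.lineMap_apply_zero,
    AffineMap.lineMap_apply_one, sub_zero, div_one] at hslope
  linarith

lemma le_add_fderivWithin_add_sq_of_lipschitz {f' : E → E →L[ℝ] ℝ} {L : ℝ}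
    (hs : Convex ℝ s) (hf : ∀ z ∈ s, HasFDerivWithinAt f (f' z) s z) (hx : x ∈ s) (hy : y ∈ s)
    (hlip : ∀ z ∈ s, ‖f' z - f' x‖ ≤ L * ‖z - x‖) :
    f y ≤ f x + f' x (y - x) + L / 2 * ‖y - x‖ ^ 2 := by
  let γ : ℝ → E := AffineMap.lineMap x y
  have hγ : MapsTo γ (Icc 0 1) s := hs.mapsTo_lineMap hx hy
  have hline (t : ℝ) (ht : t ∈ Icc (0 : ℝ) 1) :
      HasDerivWithinAt (f ∘ γ) (f' (γ t) (y - x)) (Icc 0 1) t :=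
    (hf _ (hγ ht)).comp_hasDerivWithinAt t AffineMap.hasDerivWithinAt_lineMap hγ
  have hmodel (t : ℝ) :
      HasDerivAt (fun t ↦ f x + t * f' x (y - x) + L / 2 * ‖y - x‖ ^ 2 * t ^ 2)
        (f' x (y - x) + L * ‖y - x‖ ^ 2 * t) t := by
    refine ((((hasDerivAt_id t).mul_const _).const_add _).add
      ((hasDerivAt_pow 2 t).const_mul _)).congr_deriv ?_
    push_cast
    ring
  have hbound (t : ℝ) (ht : t ∈ Ico (0 : ℝ) 1) :
      f' (γ t) (y - x) ≤ f' x (y - x) + L * ‖y - x‖ ^ 2 * t := by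
    have hγx : ‖γ t - x‖ = t * ‖y - x‖ := by
      simp [γ, AffineMap.lineMap_apply, norm_smul, abs_of_nonneg ht.1]
    calc f' (γ t) (y - x) = f' x (y - x) + (f' (γ t) - f' x) (y - x) := by simp
      _ ≤ f' x (y - x) + ‖f' (γ t) - f' x‖ * ‖y - x‖ := by
        gcongr
        exact (le_abs_self _).trans ((f' (γ t) - f' x).le_opNorm (y - x))
      _ ≤ f' x (y - x) + L * ‖γ t - x‖ * ‖y - x‖ := by
        gcongr
        exact hlip _ (hγ (Ico_subset_Icc_self ht))
      _ = f' x (y - x) + L * ‖y - x‖ ^ 2 * t := by rw [hγx]; ring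
  have hle := image_le_of_deriv_right_le_deriv_boundary
    (fun t ht ↦ (hline t ht).continuousWithinAt)
    (fun t ht ↦ (hline t (Ico_subset_Icc_self ht)).mono_of_mem_nhdsWithin
      (Icc_mem_nhdsGE_of_mem ht))
    (by simp [γ]) (fun t _ ↦ (hmodel t).continuousAt.continuousWithinAt)
    (fun t _ ↦ (hmodel t).hasDerivWithinAt) hbound (right_mem_Icc.2 zero_le_one)
  simpa [γ] using hle

end Calculus

/-- Convexity of an extended-real-valued function, as in `ProperClosedConvexE`. Only `t ∈ (0, 1)` is
considered, and `⊤ + ⊥ = ⊥` in `EReal`. -/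
def ConvexE {E : Type*} [AddCommGroup E] [Module ℝ E] (P : E → EReal) : Prop :=
  ∀ x y : E, ∀ t : ℝ, t ∈ Ioo (0 : ℝ) 1 →
    P (t • x + (1 - t) • y) ≤ (t : EReal) * P x + ((1 - t : ℝ) : EReal) * P y

lemma le_of_forall_mul_one_sub_le {c d : ℝ} (h : ∀ t ∈ Ioo (0 : ℝ) 1, c * (1 - t) ≤ d) : c ≤ d := by
  have hlim : Tendsto (fun t : ℝ ↦ c * (1 - t)) (𝓝[>] 0) (𝓝 c) :=
    (Continuous.tendsto' (by fun_prop) _ _ (by simp)).mono_left nhdsWithin_le_nhds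
  exact le_of_tendsto hlim (eventually_of_mem (Ioo_mem_nhdsGT zero_lt_one) h)

lemma add_modulus_le_of_uniformConvexOn_of_forall_le {E : Type*} [NormedAddCommGroup E]
    [NormedSpace ℝ E] {φ : ℝ → ℝ} {q : E → ℝ} {P : E → EReal} {p : E}
    (hq : UniformConvexOn univ φ q) (hP : ConvexE P)
    (hmin : ∀ w, (q p : EReal) + P p ≤ (q w : EReal) + P w) (z : E) :
    ((q p + φ ‖z - p‖ : ℝ) : EReal) + P p ≤ (q z : EReal) + P z := by
  have hz := hmin z
  -- Compare `p` with the points `t • z + (1 - t) • p`, divide by `t` and let `t → 0`.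
  have hcomb (t : ℝ) (ht : t ∈ Ioo (0 : ℝ) 1) :
      (q p : EReal) + P p
        ≤ (q (t • z + (1 - t) • p) : EReal) + ((t : EReal) * P z + ((1 - t : ℝ) : EReal) * P p) :=
    (hmin (t • z + (1 - t) • p)).trans (add_le_add_right (hP z p t ht) _)
  generalize P z = b at *
  generalize P p = a at *
  induction a with
  | bot => simp
  | top => simpa using hz
  | coe a =>
    induction b with
    | bot => exact absurd hz (by simp [← EReal.coe_add])
    | top => simp
    | coe b =>
      have hgap (t : ℝ) (ht : t ∈ Ioo (0 : ℝ) 1) :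
          φ ‖z - p‖ * (1 - t) ≤ q z + b - (q p + a) := by
        have hmid : q p + a ≤ q (t • z + (1 - t) • p) + (t * b + (1 - t) * a) := by
          exact_mod_cast hcomb t ht
        have hconv := hq.2 (mem_univ z) (mem_univ p) ht.1.le (sub_nonneg.2 ht.2.le)
          (add_sub_cancel t 1)
        simp only [smul_eq_mul] at hconv
        refine le_of_mul_le_mul_left ?_ ht.1
        linarith
      have hle := le_of_forall_mul_one_sub_le hgap
      norm_cast
      linarith

/-- The smooth part `⟨g, w⟩ + L/2 ‖w - u‖²` of the objective of a proximal subproblem, as a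
function of `w`; in pDCAe `g = ∇f(u) - ξ`. -/
def proxModel (L : ℝ) (g u w : H) : ℝ :=
  ⟪g, w⟫ + L / 2 * ‖w - u‖ ^ 2

lemma strongConvexOn_proxModel (L : ℝ) (g u : H) : StrongConvexOn univ L (proxModel L g u) := by
  rw [strongConvexOn_iff_convex]
  have haffine : (fun w ↦ proxModel L g u w - L / 2 * ‖w‖ ^ 2)
      = fun w ↦ innerₗ H (g - L • u) w + L / 2 * ‖u‖ ^ 2 := by
    ext w
    rw [proxModel, norm_sub_sq_real, innerₗ_apply_apply, inner_sub_left, real_inner_smul_left,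
      real_inner_comm u w]
    ring
  rw [haffine]
  exact ((innerₗ H (g - L • u)).convexOn convex_univ).add_const _

lemma le_conjE (g : H → ℝ) (x y : H) : ((⟪x, y⟫ - g x : ℝ) : EReal) ≤ conjE g y :=
  le_iSup (fun x : H ↦ ((⟪x, y⟫ - g x : ℝ) : EReal)) x

lemma ConvexSubgradAt.conjE_eq {g : H → ℝ} {v x : H} (h : ConvexSubgradAt g v x) :
    conjE g v = ((⟪x, v⟫ - g x : ℝ) : EReal) := by
  refine le_antisymm (iSup_le fun w ↦ EReal.coe_le_coe ?_) (le_conjE g x v)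
  have hw := h w
  rw [inner_sub_right, real_inner_comm w, real_inner_comm x] at hw
  linarith

section Potential

/-- The objective `F = f + P₁ - P₂` of the difference-of-convex program. -/
def dcObj (f : H → ℝ) (P₁ : H → EReal) (P₂ : H → ℝ) (x : H) : EReal :=
  f x + P₁ x - P₂ x

variable {f : H → ℝ} {P₁ : H → EReal} {P₂ : H → ℝ} {L : ℝ}

lemma dcObj_add_le_potE (x y w : H) :
    dcObj f P₁ P₂ x + ((L / 2 * ‖x - w‖ ^ 2 : ℝ) : EReal) ≤ potE f P₁ P₂ L x y w := by
  have hsplit : dcObj f P₁ P₂ x = f x + P₁ x - ⟪x, y⟫ + ((⟪x, y⟫ - P₂ x : ℝ) : EReal) := by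
    rw [dcObj, EReal.coe_sub, ← add_sub_assoc, EReal.sub_add_cancel]
  rw [hsplit, potE]
  gcongr
  exact le_conjE P₂ x y

lemma potE_eq_of_convexSubgradAt {ξ z : H} (hξ : ConvexSubgradAt P₂ ξ z) (x w : H) :
    potE f P₁ P₂ L x ξ w
      = ((f x - ⟪ξ, x - z⟫ + L / 2 * ‖x - w‖ ^ 2 : ℝ) : EReal) + P₁ x - P₂ z := by
  rw [potE, hξ.conjE_eq, inner_sub_right, real_inner_comm x, real_inner_comm z]
  induction P₁ x with
  | bot => simp
  | top =>
    simp only [sub_eq_add_neg, ← EReal.coe_neg, EReal.coe_add_top, EReal.top_add_coe]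
  | coe a => norm_cast; ring

variable [CompleteSpace H] {f' : H → H} {ξ u p z : H}

lemma add_sq_add_le_of_forall_proxModel_le (hf : ConvexOn ℝ univ f)
    (hf' : ∀ y, HasGradientAt f (f' y) y) (hlip : ∀ y z, ‖f' y - f' z‖ ≤ L * ‖y - z‖)
    (hP₁ : ConvexE P₁)
    (hp : ∀ w, (proxModel L (f' u - ξ) u p : EReal) + P₁ p
      ≤ (proxModel L (f' u - ξ) u w : EReal) + P₁ w) (z : H) :
    ((f p - ⟪ξ, p - z⟫ + L / 2 * ‖p - z‖ ^ 2 : ℝ) : EReal) + P₁ p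
      ≤ ((f z + L / 2 * ‖z - u‖ ^ 2 : ℝ) : EReal) + P₁ z := by
  have hdescent : f p ≤ f u + ⟪f' u, p - u⟫ + L / 2 * ‖p - u‖ ^ 2 :=
    le_add_fderivWithin_add_sq_of_lipschitz convex_univ
      (fun y _ ↦ (hf' y).hasFDerivAt.hasFDerivWithinAt) (mem_univ u) (mem_univ p)
      (fun y _ ↦ by simpa only [← map_sub, LinearIsometryEquiv.norm_map] using hlip y u)
  have hgrad : f u + ⟪f' u, z - u⟫ ≤ f z :=
    add_fderivWithin_le_of_convexOn hf (hf' u).hasFDerivAt.hasFDerivWithinAt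
      (mem_univ u) (mem_univ z)
  have hgrowth := add_modulus_le_of_uniformConvexOn_of_forall_le
    (strongConvexOn_proxModel L (f' u - ξ) u) hP₁ hp z
  set q := proxModel L (f' u - ξ) u with hq
  -- The constant by which `q` differs from the quadratic model of `f` at `u` minus `⟪ξ, · - z⟫`.
  set c := f u - ⟪f' u, u⟫ + ⟪ξ, z⟫ with hc
  have hp_le : f p - ⟪ξ, p - z⟫ + L / 2 * ‖p - z‖ ^ 2 ≤ c + (q p + L / 2 * ‖z - p‖ ^ 2) := by
    simp only [hq, hc, proxModel, inner_sub_right, inner_sub_left, norm_sub_rev p z] at hdescent ⊢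
    linarith
  have hz_le : c + q z ≤ f z + L / 2 * ‖z - u‖ ^ 2 := by
    simp only [hq, hc, proxModel, inner_sub_right, inner_sub_left] at hgrad ⊢
    linarith
  calc ((f p - ⟪ξ, p - z⟫ + L / 2 * ‖p - z‖ ^ 2 : ℝ) : EReal) + P₁ p
    _ ≤ ((c + (q p + L / 2 * ‖z - p‖ ^ 2) : ℝ) : EReal) + P₁ p := by gcongr
    _ ≤ ((c + q z : ℝ) : EReal) + P₁ z := by
      rw [EReal.coe_add c, EReal.coe_add c, add_assoc, add_assoc]
      gcongr
    _ ≤ ((f z + L / 2 * ‖z - u‖ ^ 2 : ℝ) : EReal) + P₁ z := by gcongr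

lemma potE_le_dcObj_add_of_forall_proxModel_le (hf : ConvexOn ℝ univ f)
    (hf' : ∀ y, HasGradientAt f (f' y) y) (hlip : ∀ y z, ‖f' y - f' z‖ ≤ L * ‖y - z‖)
    (hP₁ : ConvexE P₁) (hξ : ConvexSubgradAt P₂ ξ z)
    (hp : ∀ w, (proxModel L (f' u - ξ) u p : EReal) + P₁ p
      ≤ (proxModel L (f' u - ξ) u w : EReal) + P₁ w) :
    potE f P₁ P₂ L p ξ z ≤ dcObj f P₁ P₂ z + ((L / 2 * ‖z - u‖ ^ 2 : ℝ) : EReal) :=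
  calc potE f P₁ P₂ L p ξ z
    _ = ((f p - ⟪ξ, p - z⟫ + L / 2 * ‖p - z‖ ^ 2 : ℝ) : EReal) + P₁ p - P₂ z :=
      potE_eq_of_convexSubgradAt hξ p z
    _ ≤ ((f z + L / 2 * ‖z - u‖ ^ 2 : ℝ) : EReal) + P₁ z - P₂ z :=
      EReal.sub_le_sub (add_sq_add_le_of_forall_proxModel_le hf hf' hlip hP₁ hp z) le_rfl
    _ = dcObj f P₁ P₂ z + ((L / 2 * ‖z - u‖ ^ 2 : ℝ) : EReal) := by
      simp only [dcObj, EReal.coe_add, sub_eq_add_neg]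
      ac_rfl

end Potential

theorem pDCAe_potE_descent_general [CompleteSpace H] (f : H → ℝ) (f' : H → H) (P₁ : H → EReal)
    (P₂ : H → ℝ) (L : ℝ) (β : ℕ → ℝ) (x ξ : ℕ → H) (hf : ConvexOn ℝ univ f)
    (hf' : ∀ y, HasGradientAt f (f' y) y) (hlip : ∀ y z, ‖f' y - f' z‖ ≤ L * ‖y - z‖)
    (hP₁ : ConvexE P₁) (hseq : IsPDCAe f' P₁ P₂ L β x ξ) (k : ℕ) :
    potE f P₁ P₂ L (x (k + 1)) (ξ (k + 1)) (x k)
      ≤ potE f P₁ P₂ L (x k) (ξ k) (x (k - 1))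
        - ((L / 2 * (1 - β k ^ 2) * ‖x k - x (k - 1)‖ ^ 2 : ℝ) : EReal) := by
  obtain ⟨-, hξ, hmin⟩ := hseq
  set d := x k - x (k - 1)
  have hquad : L / 2 * ‖x k - (x k + β k • d)‖ ^ 2
      = L / 2 * ‖d‖ ^ 2 - L / 2 * (1 - β k ^ 2) * ‖d‖ ^ 2 := by
    rw [sub_add_cancel_left, norm_neg, norm_smul, mul_pow, Real.norm_eq_abs, sq_abs]
    ring
  calc potE f P₁ P₂ L (x (k + 1)) (ξ (k + 1)) (x k)
    _ ≤ dcObj f P₁ P₂ (x k) + ((L / 2 * ‖x k - (x k + β k • d)‖ ^ 2 : ℝ) : EReal) :=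
      potE_le_dcObj_add_of_forall_proxModel_le hf hf' hlip hP₁ (hξ k) (hmin k)
    _ = dcObj f P₁ P₂ (x k) + ((L / 2 * ‖d‖ ^ 2 : ℝ) : EReal)
        - ((L / 2 * (1 - β k ^ 2) * ‖d‖ ^ 2 : ℝ) : EReal) := by
      rw [hquad, EReal.coe_sub, add_sub_assoc]
    _ ≤ potE f P₁ P₂ L (x k) (ξ k) (x (k - 1))
        - ((L / 2 * (1 - β k ^ 2) * ‖d‖ ^ 2 : ℝ) : EReal) :=
      EReal.sub_le_sub (dcObj_add_le_potE _ _ _) le_rfl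

/-- Proposition 1(i): sufficient descent of the potential function `E` along pDCAe. -/
theorem pDCAe_potE_descent
    {n : ℕ} (f : Eucl n → ℝ) (f' : Eucl n → Eucl n) (P₁ : Eucl n → EReal)
    (P₂ : Eucl n → ℝ) (L : ℝ) (β : ℕ → ℝ) (x ξ : ℕ → Eucl n)
    (hL : 0 < L)
    (hfconv : ConvexOn ℝ Set.univ f)
    (hfgrad : ∀ y, HasGradientAt f (f' y) y)
    (hflip : ∀ y z, ‖f' y - f' z‖ ≤ L * ‖y - z‖)
    (hP₁ : ProperClosedConvexE P₁)
    (hP₂cont : Continuous P₂)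
    (hP₂conv : ConvexOn ℝ Set.univ P₂)
    (hβ : ∀ k, β k ∈ Set.Ico (0:ℝ) 1)
    (hβsup : ∃ B < (1:ℝ), ∀ k, β k ≤ B)
    (hlevel : ∀ γ : ℝ, IsBounded {y : Eucl n |
      ((f y : ℝ) : EReal) + P₁ y - ((P₂ y : ℝ) : EReal) ≤ (γ : EReal)})
    (hseq : IsPDCAe f' P₁ P₂ L β x ξ)
    : ∀ k : ℕ, 1 ≤ k →
      potE f P₁ P₂ L (x (k + 1)) (ξ (k + 1)) (x k)
        ≤ potE f P₁ P₂ L (x k) (ξ k) (x (k - 1))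
          - ((L / 2 * (1 - β k ^ 2) * ‖x k - x (k - 1)‖ ^ 2 : ℝ) : EReal) := fun k _ ↦
  pDCAe_potE_descent_general f f' P₁ P₂ L β x ξ hfconv hfgrad hflip hP₁.2.2.2 hseq k
end
end

section
/- Let F(x) = f(x) + P₁(x) − P₂(x) be level-bounded, and let {x^k} and {ξ^k} be the sequences generated by pDCA_e for minimizing F. Then the sequences {x^k} and {ξ^k} are bounded; consequently, the set Υ of accumulation points of the sequence {(x^k, ξ^k, x^{k−1})} is a nonempty compact subset of ℝⁿ × ℝⁿ × ℝⁿ. -/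
/-!
The energy `F(xᵏ) + L/2 ‖xᵏ - xᵏ⁻¹‖²` is nonincreasing. Indeed, the subproblem defining `xᵏ⁺¹` is
`L`-strongly convex, so its minimizer beats the competitor `xᵏ` by at least `L/2 ‖xᵏ⁺¹ - xᵏ‖²`.
Combining this with the descent lemma for `f` between `uᵏ` and `xᵏ⁺¹`, the tangent inequality for
`f` at `uᵏ` and the subgradient inequality for `P₂` at `xᵏ` gives
`F(xᵏ⁺¹) + L/2 ‖xᵏ⁺¹ - xᵏ‖² ≤ F(xᵏ) + L/2 ‖xᵏ - uᵏ‖²`, and `‖xᵏ - uᵏ‖ = |βₖ| ‖xᵏ - xᵏ⁻¹‖`.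
As `x⁻¹ = x⁰`, all iterates lie in the bounded sublevel set `{F ≤ F(x⁰)}`, and subgradients of the
continuous function `P₂` at the points of a bounded set form a bounded set.
-/

open Filter Topology Set Metric Bornology
open scoped RealInnerProductSpace

noncomputable section

variable {H : Type*} [NormedAddCommGroup H] [InnerProductSpace ℝ H]

section NormedSpace

variable {E G : Type*} [NormedAddCommGroup E] [NormedSpace ℝ E] [NormedAddCommGroup G]
  [NormedSpace ℝ G] {s : Set E} {x y : E}

lemma hasDerivAt_comp_lineMap {f : E → G} {f' : E →L[ℝ] G} {t : ℝ}
    (hf : HasFDerivAt f f' (AffineMap.lineMap x y t)) :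
    HasDerivAt (fun τ : ℝ => f (AffineMap.lineMap x y τ)) (f' (y - x)) t :=
  hf.comp_hasDerivAt t (AffineMap.hasDerivAt_lineMap (𝕜 := ℝ))

lemma add_fderiv_le_of_convexOn {f : E → ℝ} {f' : E →L[ℝ] ℝ} (hf : ConvexOn ℝ s f) (hx : x ∈ s)
    (hy : y ∈ s) (hf' : HasFDerivAt f f' x) : f x + f' (y - x) ≤ f y := by
  have hline : ConvexOn ℝ (AffineMap.lineMap x y ⁻¹' s) (f ∘ AffineMap.lineMap (k := ℝ) x y) :=
    hf.comp_affineMap _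
  have hderiv : HasDerivAt (f ∘ AffineMap.lineMap (k := ℝ) x y) (f' (y - x)) 0 :=
    hasDerivAt_comp_lineMap (by rwa [AffineMap.lineMap_apply_zero])
  have hslope := hline.le_slope_of_hasDerivAt (x := 0) (y := 1) (by simpa using hx)
    (by simpa using hy) one_pos hderiv
  simp only [slope_def_field, Function.comp_apply, AffineMap.lineMap_apply_zero,
    AffineMap.lineMap_apply_one, sub_zero, div_one] at hslope
  linarith

/- Along the segment `γ` from `x` to `y` the remainder has derivative `(f' (γ t) - f' x) (y - x)`,
of norm at most `L t ‖y - x‖²`, the derivative of `L / 2 * ‖y - x‖² t²`. -/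
lemma norm_sub_sub_fderiv_le {f : E → G} {f' : E → E →L[ℝ] G} {L : ℝ}
    (hf : ∀ z ∈ segment ℝ x y, HasFDerivAt f (f' z) z)
    (hL : ∀ z ∈ segment ℝ x y, ‖f' z - f' x‖ ≤ L * ‖z - x‖) :
    ‖f y - f x - f' x (y - x)‖ ≤ L / 2 * ‖y - x‖ ^ 2 := by
  set γ : ℝ →ᵃ[ℝ] E := AffineMap.lineMap x y with hγ
  have hγ_mem : ∀ t ∈ Icc (0 : ℝ) 1, γ t ∈ segment ℝ x y := fun t ht => by
    rw [segment_eq_image_lineMap]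
    exact mem_image_of_mem _ ht
  have hremainder : ∀ t ∈ Icc (0 : ℝ) 1,
      HasDerivAt (fun τ => f (γ τ) - f x - τ • f' x (y - x)) ((f' (γ t) - f' x) (y - x)) t :=
    fun t ht => by
      simpa using! ((hasDerivAt_comp_lineMap (hf _ (hγ_mem t ht))).sub_const (f x)).sub
        ((hasDerivAt_id t).smul_const (f' x (y - x)))
  have hbound : ∀ t ∈ Ico (0 : ℝ) 1, ‖(f' (γ t) - f' x) (y - x)‖ ≤ L * ‖y - x‖ ^ 2 * t :=
    fun t ht => calc
      ‖(f' (γ t) - f' x) (y - x)‖ ≤ ‖f' (γ t) - f' x‖ * ‖y - x‖ := ContinuousLinearMap.le_opNorm _ _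
      _ ≤ L * ‖γ t - x‖ * ‖y - x‖ := by gcongr; exact hL _ (hγ_mem t (Ico_subset_Icc_self ht))
      _ = L * ‖y - x‖ ^ 2 * t := by
        rw [hγ, ← dist_eq_norm, dist_lineMap_left, Real.norm_of_nonneg ht.1, dist_eq_norm']
        ring
  have hquadratic : ∀ t : ℝ,
      HasDerivAt (fun τ => L / 2 * ‖y - x‖ ^ 2 * τ ^ 2) (L * ‖y - x‖ ^ 2 * t) t := fun t =>
    ((hasDerivAt_pow 2 t).const_mul (L / 2 * ‖y - x‖ ^ 2)).congr_deriv (by norm_num; ring)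
  simpa [hγ] using image_norm_le_of_norm_deriv_right_le_deriv_boundary
    (fun t ht => (hremainder t ht).continuousAt.continuousWithinAt)
    (fun t ht => (hremainder t (Ico_subset_Icc_self ht)).hasDerivWithinAt)
    (by simp [hγ]) hquadratic hbound (right_mem_Icc.2 zero_le_one)

/- Compare `x` with the points `t • y + (1 - t) • x` of the segment and let `t → 0`. -/
lemma add_le_of_uniformConvexOn_of_isMinOn {φ : E → ℝ} {ψ : ℝ → ℝ} (hφ : UniformConvexOn s ψ φ)
    (hmin : IsMinOn φ s x) (hx : x ∈ s) (hy : y ∈ s) : φ x + ψ ‖y - x‖ ≤ φ y := by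
  have hsegment : ∀ t ∈ Ioo (0 : ℝ) 1, φ x + (1 - t) * ψ ‖y - x‖ ≤ φ y := by
    intro t ht
    have hconv := hφ.2 hy hx ht.1.le (sub_nonneg.2 ht.2.le) (add_sub_cancel t 1)
    have hle := isMinOn_iff.1 hmin _
      (hφ.1 hy hx ht.1.le (sub_nonneg.2 ht.2.le) (add_sub_cancel t 1))
    simp only [smul_eq_mul] at hconv
    refine le_of_mul_le_mul_left ?_ ht.1
    linarith
  have hlim : Tendsto (fun t : ℝ => φ x + (1 - t) * ψ ‖y - x‖) (𝓝[>] 0)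
      (𝓝 (φ x + ψ ‖y - x‖)) :=
    tendsto_nhdsWithin_of_tendsto_nhds (Continuous.tendsto' (by fun_prop) _ _ (by ring))
  exact le_of_tendsto hlim (mem_of_superset (Ioo_mem_nhdsGT one_pos) hsegment)

end NormedSpace

section ClusterPoints

variable {ι X : Type*} [PseudoMetricSpace X] [ProperSpace X] {l : Filter ι} {u : ι → X}

lemma nonempty_setOf_mapClusterPt [l.NeBot] (hu : IsBounded (range u)) :
    {p | MapClusterPt p l u}.Nonempty := by
  obtain ⟨p, -, hp⟩ := hu.isCompact_closure.exists_mapClusterPt (f := l) (u := u)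
    (tendsto_principal.2 (.of_forall fun i => subset_closure (mem_range_self i)))
  exact ⟨p, hp⟩

lemma isCompact_setOf_mapClusterPt (hu : IsBounded (range u)) :
    IsCompact {p | MapClusterPt p l u} :=
  hu.isCompact_closure.of_isClosed_subset isClosed_setOfPred_clusterPt fun _ hp =>
    isClosed_closure.mem_of_mapClusterPt hp (.of_forall fun i => subset_closure (mem_range_self i))

end ClusterPoints

lemma isBounded_range_toLp_prodMk {ι α β : Type*} [PseudoMetricSpace α] [PseudoMetricSpace β]
    {p : ENNReal} [Fact (1 ≤ p)] {a : ι → α} {b : ι → β} (ha : IsBounded (range a))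
    (hb : IsBounded (range b)) : IsBounded (range fun i => WithLp.toLp p (a i, b i)) := by
  refine ((WithLp.prod_lipschitzWith_toLp p α β).isBounded_image (ha.prod hb)).subset ?_
  rintro _ ⟨i, rfl⟩
  exact mem_image_of_mem _ ⟨mem_range_self i, mem_range_self i⟩

section Subgradients

variable {g : H → ℝ}

/- Moving by a unit step from `a` in the direction of `v` raises `g` by at least `‖v‖`. -/
lemma norm_le_of_convexSubgradAt {a v : H} {M : ℝ} (hv : ConvexSubgradAt g v a)
    (hM : ∀ y ∈ closedBall a 1, g y - g a ≤ M) : ‖v‖ ≤ M := by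
  have hstep : a + ‖v‖⁻¹ • v ∈ closedBall a 1 := by
    rw [mem_closedBall_iff_norm, add_sub_cancel_left, norm_smul, norm_inv, norm_norm]
    exact inv_mul_le_one
  have hinner : ⟪v, a + ‖v‖⁻¹ • v - a⟫ = ‖v‖ := by
    rw [add_sub_cancel_left, inner_smul_right, real_inner_self_eq_norm_sq, sq, ← mul_assoc,
      inv_mul_mul_self]
  have hgrowth := hv (a + ‖v‖⁻¹ • v)
  linarith [hM _ hstep]

lemma isBounded_setOf_convexSubgradAt [ProperSpace H] (hg : Continuous g) {s : Set H}
    (hs : IsBounded s) : IsBounded {v | ∃ a ∈ s, ConvexSubgradAt g v a} := by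
  obtain ⟨M, hM⟩ := (isCompact_of_isClosed_isBounded isClosed_cthickening
    (hs.cthickening (δ := 1))).exists_bound_of_continuousOn hg.continuousOn
  refine isBounded_iff_forall_norm_le.2 ⟨M + M, ?_⟩
  rintro v ⟨a, ha, hv⟩
  refine norm_le_of_convexSubgradAt hv fun y hy => ?_
  have hgy := abs_le.1 (hM y (closedBall_subset_cthickening ha 1 hy))
  have hga := abs_le.1 (hM a (self_subset_cthickening s ha))
  linarith

end Subgradients

section ProximalStep

variable {s : Set H} {g : H → ℝ}

lemma strongConvexOn_inner_add_sq_add (hg : ConvexOn ℝ s g) (c u : H) (L : ℝ) :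
    StrongConvexOn s L fun z => ⟪c, z⟫ + L / 2 * ‖z - u‖ ^ 2 + g z := by
  rw [strongConvexOn_iff_convex]
  have hlinear : ConvexOn ℝ s fun z => ⟪c - L • u, z⟫ :=
    ((innerSL ℝ (c - L • u)).toLinearMap).convexOn hg.1
  refine ((hg.add hlinear).add_const (L / 2 * ‖u‖ ^ 2)).congr fun z _ => ?_
  simp only [Pi.add_apply, norm_sub_sq_real, inner_sub_left, real_inner_smul_left,
    real_inner_comm u z]
  ring

lemma dc_proximal_step [CompleteSpace H] {f p : H → ℝ} {f' : H → H} {L : ℝ} {u v a b : H}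
    (hf : ConvexOn ℝ univ f) (hf' : ∀ y, HasGradientAt f (f' y) y)
    (hL : ∀ y, ‖f' y - f' u‖ ≤ L * ‖y - u‖) (hg : ConvexOn ℝ s g) (hv : ConvexSubgradAt p v a)
    (ha : a ∈ s) (hb : b ∈ s)
    (hmin : IsMinOn (fun z => ⟪f' u - v, z⟫ + L / 2 * ‖z - u‖ ^ 2 + g z) s b) :
    f b + g b - p b + L / 2 * ‖b - a‖ ^ 2 ≤ f a + g a - p a + L / 2 * ‖a - u‖ ^ 2 := by
  have hgrowth := add_le_of_uniformConvexOn_of_isMinOn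
    (strongConvexOn_inner_add_sq_add hg (f' u - v) u L) hmin hb ha
  have htangent : f u + ⟪f' u, a - u⟫ ≤ f a :=
    add_fderiv_le_of_convexOn hf (mem_univ u) (mem_univ a) (hf' u).hasFDerivAt
  have hdescent : f b - f u - ⟪f' u, b - u⟫ ≤ L / 2 * ‖b - u‖ ^ 2 :=
    (le_abs_self _).trans <| norm_sub_sub_fderiv_le (fun z _ => (hf' z).hasFDerivAt) fun z _ => by
      rw [← map_sub, LinearIsometryEquiv.norm_map]
      exact hL z
  have hsubgrad := hv b
  rw [norm_sub_rev a b] at hgrowth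
  simp only [inner_sub_left, inner_sub_right] at hgrowth htangent hdescent hsubgrad
  linarith

end ProximalStep

/-- The effective domain `dom P` of an extended-real-valued function that avoids `-∞`. -/
def effDomain {α : Type*} (P : α → EReal) : Set α := {y | P y ≠ ⊤}

lemma ProperClosedConvexE.convexOn_toReal {P : H → EReal} (hP : ProperClosedConvexE P) :
    ConvexOn ℝ (effDomain P) fun y => (P y).toReal := by
  obtain ⟨hbot, -, -, hconv⟩ := hP
  have hcoe : ∀ y ∈ effDomain P, P y = ((P y).toReal : EReal) := fun y hy =>
    (EReal.coe_toReal hy (hbot y)).symm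
  have hsegment : ∀ y ∈ effDomain P, ∀ z ∈ effDomain P, ∀ a b : ℝ, 0 < a → 0 < b → a + b = 1 →
      P (a • y + b • z) ≤ ((a * (P y).toReal + b * (P z).toReal : ℝ) : EReal) := by
    intro y hy z hz a b ha hb hab
    obtain rfl : b = 1 - a := by linarith
    have h := hconv y z a ⟨ha, by linarith⟩
    rw [hcoe y hy, hcoe z hz] at h
    exact_mod_cast h
  have hdomain : Convex ℝ (effDomain P) := convex_iff_forall_pos.2
    fun y hy z hz a b ha hb hab =>
      ((hsegment y hy z hz a b ha hb hab).trans_lt (EReal.coe_lt_top _)).ne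
  refine convexOn_iff_forall_pos.2 ⟨hdomain, fun y hy z hz a b ha hb hab => ?_⟩
  have h := hsegment y hy z hz a b ha hb hab
  rw [hcoe _ (hdomain hy hz ha.le hb.le hab)] at h
  exact_mod_cast h

/-- The objective `F = f + P₁ - P₂` of the difference-of-convex program as a real number; on
`P₁ = ⊤` the value is junk. -/
def dcObjective {α : Type*} (f : α → ℝ) (P₁ : α → EReal) (P₂ : α → ℝ) (y : α) : ℝ :=
  f y + (P₁ y).toReal - P₂ y

lemma coe_dcObjective {α : Type*} {f : α → ℝ} {P₁ : α → EReal} {P₂ : α → ℝ} {y : α}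
    (hbot : P₁ y ≠ ⊥) (htop : P₁ y ≠ ⊤) :
    (dcObjective f P₁ P₂ y : EReal) = (f y : EReal) + P₁ y - (P₂ y : EReal) := by
  rw [dcObjective, EReal.coe_sub, EReal.coe_add, EReal.coe_toReal htop hbot]

/-- The energy `F(xᵏ) + L/2 ‖xᵏ - xᵏ⁻¹‖²`, nonincreasing along pDCAₑ. At `k = 0` truncated
subtraction makes the second term vanish, in agreement with `x⁻¹ = x⁰`. -/
def pdcaEnergy (f : H → ℝ) (P₁ : H → EReal) (P₂ : H → ℝ) (L : ℝ) (x : ℕ → H) (k : ℕ) : ℝ :=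
  dcObjective f P₁ P₂ (x k) + L / 2 * ‖x k - x (k - 1)‖ ^ 2

namespace IsPDCAe

variable {f : H → ℝ} {f' : H → H} {P₁ : H → EReal} {P₂ : H → ℝ} {L : ℝ} {β : ℕ → ℝ}
  {x ξ : ℕ → H}

lemma mem_effDomain (hseq : IsPDCAe f' P₁ P₂ L β x ξ) : ∀ k, x k ∈ effDomain P₁
  | 0 => hseq.1
  | k + 1 => fun htop => by
    have hle := hseq.2.2 k (x 0)
    rw [htop, EReal.coe_add_top, top_le_iff] at hle
    exact EReal.add_ne_top (EReal.coe_ne_top _) hseq.1 hle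

lemma isMinOn (hseq : IsPDCAe f' P₁ P₂ L β x ξ) (hbot : ∀ y, P₁ y ≠ ⊥) (k : ℕ) :
    IsMinOn (fun z => ⟪f' (x k + β k • (x k - x (k - 1))) - ξ (k + 1), z⟫
      + L / 2 * ‖z - (x k + β k • (x k - x (k - 1)))‖ ^ 2 + (P₁ z).toReal)
      (effDomain P₁) (x (k + 1)) := by
  refine isMinOn_iff.2 fun z hz => ?_
  have hle := hseq.2.2 k z
  rw [← EReal.coe_toReal (hseq.mem_effDomain (k + 1)) (hbot _),
    ← EReal.coe_toReal hz (hbot z)] at hle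
  exact_mod_cast hle

lemma antitone_pdcaEnergy [CompleteSpace H] (hseq : IsPDCAe f' P₁ P₂ L β x ξ) (hL : 0 ≤ L)
    (hf : ConvexOn ℝ univ f) (hf' : ∀ y, HasGradientAt f (f' y) y)
    (hlip : ∀ y z, ‖f' y - f' z‖ ≤ L * ‖y - z‖) (hbot : ∀ y, P₁ y ≠ ⊥)
    (hP₁ : ConvexOn ℝ (effDomain P₁) fun y => (P₁ y).toReal) (hβ : ∀ k, |β k| ≤ 1) :
    Antitone (pdcaEnergy f P₁ P₂ L x) := by
  refine antitone_nat_of_succ_le fun k => ?_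
  have hextrapolate :
      ‖x k - (x k + β k • (x k - x (k - 1)))‖ ≤ ‖x k - x (k - 1)‖ := by
    rw [sub_add_cancel_left, norm_neg, norm_smul]
    exact mul_le_of_le_one_left (norm_nonneg _) (hβ k)
  calc pdcaEnergy f P₁ P₂ L x (k + 1)
      ≤ dcObjective f P₁ P₂ (x k)
          + L / 2 * ‖x k - (x k + β k • (x k - x (k - 1)))‖ ^ 2 :=
        dc_proximal_step hf hf' (fun y => hlip y _) hP₁ (hseq.2.1 k) (hseq.mem_effDomain k)
          (hseq.mem_effDomain (k + 1)) (hseq.isMinOn hbot k)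
    _ ≤ pdcaEnergy f P₁ P₂ L x k := by unfold pdcaEnergy; gcongr

lemma dcObjective_le [CompleteSpace H] (hseq : IsPDCAe f' P₁ P₂ L β x ξ) (hL : 0 ≤ L)
    (hf : ConvexOn ℝ univ f) (hf' : ∀ y, HasGradientAt f (f' y) y)
    (hlip : ∀ y z, ‖f' y - f' z‖ ≤ L * ‖y - z‖) (hbot : ∀ y, P₁ y ≠ ⊥)
    (hP₁ : ConvexOn ℝ (effDomain P₁) fun y => (P₁ y).toReal) (hβ : ∀ k, |β k| ≤ 1) (k : ℕ) :
    dcObjective f P₁ P₂ (x k) ≤ dcObjective f P₁ P₂ (x 0) := calc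
  dcObjective f P₁ P₂ (x k) ≤ pdcaEnergy f P₁ P₂ L x k :=
    le_add_of_nonneg_right (by positivity)
  _ ≤ pdcaEnergy f P₁ P₂ L x 0 :=
    hseq.antitone_pdcaEnergy hL hf hf' hlip hbot hP₁ hβ (Nat.zero_le k)
  _ = dcObjective f P₁ P₂ (x 0) := by simp [pdcaEnergy]

lemma isBounded_range_subgrad [ProperSpace H] (hseq : IsPDCAe f' P₁ P₂ L β x ξ)
    (hP₂ : Continuous P₂) (hx : IsBounded (range x)) : IsBounded (range ξ) := by
  rw [← Nat.range_of_succ ξ]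
  refine isBounded_singleton.union ((isBounded_setOf_convexSubgradAt hP₂ hx).subset ?_)
  rintro _ ⟨k, rfl⟩
  exact ⟨x k, mem_range_self k, hseq.2.1 k⟩

end IsPDCAe

theorem pDCAe_bounded_accumulation_general [FiniteDimensional ℝ H]
    {f : H → ℝ} {f' : H → H} {P₁ : H → EReal} {P₂ : H → ℝ} {L : ℝ} {β : ℕ → ℝ} {x ξ : ℕ → H}
    (hL : 0 ≤ L) (hf : ConvexOn ℝ univ f) (hf' : ∀ y, HasGradientAt f (f' y) y)
    (hlip : ∀ y z, ‖f' y - f' z‖ ≤ L * ‖y - z‖) (hbot : ∀ y, P₁ y ≠ ⊥)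
    (hP₁ : ConvexOn ℝ (effDomain P₁) fun y => (P₁ y).toReal) (hP₂ : Continuous P₂)
    (hβ : ∀ k, |β k| ≤ 1)
    (hlevel : IsBounded {y | (f y : EReal) + P₁ y - (P₂ y : EReal) ≤ dcObjective f P₁ P₂ (x 0)})
    (hseq : IsPDCAe f' P₁ P₂ L β x ξ) :
    IsBounded (range x) ∧ IsBounded (range ξ) ∧
      {p | MapClusterPt p atTop fun k =>
        WithLp.toLp 2 (x (k + 1), WithLp.toLp 2 (ξ (k + 1), x k))}.Nonempty ∧
      IsCompact {p | MapClusterPt p atTop fun k =>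
        WithLp.toLp 2 (x (k + 1), WithLp.toLp 2 (ξ (k + 1), x k))} := by
  have hx : IsBounded (range x) := hlevel.subset <| range_subset_iff.2 fun k => by
    rw [mem_ofPred_eq, ← coe_dcObjective (hbot _) (hseq.mem_effDomain k)]
    exact_mod_cast hseq.dcObjective_le hL hf hf' hlip hbot hP₁ hβ k
  have hξ : IsBounded (range ξ) := hseq.isBounded_range_subgrad hP₂ hx
  have htriple : IsBounded (range fun k =>
      WithLp.toLp 2 (x (k + 1), WithLp.toLp 2 (ξ (k + 1), x k))) :=
    isBounded_range_toLp_prodMk (hx.subset (range_comp_subset_range _ x))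
      (isBounded_range_toLp_prodMk (hξ.subset (range_comp_subset_range _ ξ)) hx)
  have : ProperSpace (WithLp 2 (H × WithLp 2 (H × H))) := FiniteDimensional.proper_real _
  exact ⟨hx, hξ, nonempty_setOf_mapClusterPt htriple, isCompact_setOf_mapClusterPt htriple⟩

/-- Proposition 1(ii): boundedness of the pDCAe sequences and compactness of the set of
accumulation points of `{(xᵏ, ξᵏ, xᵏ⁻¹)}`. -/
theorem pDCAe_bounded_accumulation
    {n : ℕ} (f : Eucl n → ℝ) (f' : Eucl n → Eucl n) (P₁ : Eucl n → EReal)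
    (P₂ : Eucl n → ℝ) (L : ℝ) (β : ℕ → ℝ) (x ξ : ℕ → Eucl n)
    (hL : 0 < L)
    (hfconv : ConvexOn ℝ Set.univ f)
    (hfgrad : ∀ y, HasGradientAt f (f' y) y)
    (hflip : ∀ y z, ‖f' y - f' z‖ ≤ L * ‖y - z‖)
    (hP₁ : ProperClosedConvexE P₁)
    (hP₂cont : Continuous P₂)
    (hP₂conv : ConvexOn ℝ Set.univ P₂)
    (hβ : ∀ k, β k ∈ Set.Ico (0:ℝ) 1)
    (hβsup : ∃ B < (1:ℝ), ∀ k, β k ≤ B)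
    (hlevel : ∀ γ : ℝ, IsBounded {y : Eucl n |
      ((f y : ℝ) : EReal) + P₁ y - ((P₂ y : ℝ) : EReal) ≤ (γ : EReal)})
    (hseq : IsPDCAe f' P₁ P₂ L β x ξ)
    : IsBounded (Set.range x) ∧ IsBounded (Set.range ξ) ∧
      {p : Trip n |
        MapClusterPt p atTop (fun k : ℕ => mkTrip (x (k + 1)) (ξ (k + 1)) (x k))}.Nonempty ∧
      IsCompact {p : Trip n |
        MapClusterPt p atTop (fun k : ℕ => mkTrip (x (k + 1)) (ξ (k + 1)) (x k))} :=
  pDCAe_bounded_accumulation_general hL.le hfconv hfgrad hflip hP₁.1 hP₁.convexOn_toReal hP₂cont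
    (fun k => (abs_of_nonneg (hβ k).1).trans_le (hβ k).2.le) (hlevel _) hseq
end
end
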